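/- The continuous-time primal value equals the Lebesgue measure (volume) of the maximum controlled invariant set: p* = λ(X_I). Moreover the supremum is attained by the restriction of the Lebesgue measure to X_I: there exist finite nonnegative Borel measures μ and μ̂₀ such that the triple (λ|_{X_I}, μ, μ̂₀) is feasible for the continuous-time primal LP. -/

import Mathlib

open MeasureTheory
open scoped ENNReal

/-- The (topological) support of a Borel measure. -/
def msupport {α : Type*} [TopologicalSpace α] [MeasurableSpace α] (μ : Measure α) : Set α :=
  {x | ∀ s : Set α, IsOpen s → x ∈ s → 0 < μ s}

/-- An admissible trajectory of the convexified inclusion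
`ẋ(t) ∈ conv f(x(t), U)`, `x(t) ∈ X`, on `[0, ∞)`. -/
def IsAdmissible {n m : ℕ} (X : Set (EuclideanSpace ℝ (Fin n)))
    (U : Set (EuclideanSpace ℝ (Fin m)))
    (f : EuclideanSpace ℝ (Fin n) → EuclideanSpace ℝ (Fin m) → EuclideanSpace ℝ (Fin n))
    (x : ℝ → EuclideanSpace ℝ (Fin n)) : Prop :=
  (∀ t, 0 ≤ t → x t ∈ X) ∧
  ∃ d : ℝ → EuclideanSpace ℝ (Fin n),
    (∀ t, 0 ≤ t → IntervalIntegrable d volume 0 t) ∧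
    (∀ t, 0 ≤ t → x t = x 0 + ∫ s in (0:ℝ)..t, d s) ∧
    (∀ᵐ t ∂(volume.restrict (Set.Ici (0:ℝ))), d t ∈ convexHull ℝ ((f (x t)) '' U))

/-- The maximum controlled invariant set of the continuous-time relaxed system. -/
def mciC {n m : ℕ} (X : Set (EuclideanSpace ℝ (Fin n))) (U : Set (EuclideanSpace ℝ (Fin m)))
    (f : EuclideanSpace ℝ (Fin n) → EuclideanSpace ℝ (Fin m) → EuclideanSpace ℝ (Fin n)) :
    Set (EuclideanSpace ℝ (Fin n)) :=
  {x0 | ∃ x : ℝ → EuclideanSpace ℝ (Fin n), IsAdmissible X U f x ∧ x 0 = x0}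

/-- The continuous-time discounted Liouville equation for the pair `(μ₀, μ)`. -/
def LiouvilleC {n m : ℕ}
    (f : EuclideanSpace ℝ (Fin n) → EuclideanSpace ℝ (Fin m) → EuclideanSpace ℝ (Fin n))
    (β : ℝ) (μ₀ : Measure (EuclideanSpace ℝ (Fin n)))
    (μ : Measure (EuclideanSpace ℝ (Fin n) × EuclideanSpace ℝ (Fin m))) : Prop :=
  ∀ v : EuclideanSpace ℝ (Fin n) → ℝ, ContDiff ℝ 1 v →
    β * ∫ p, v p.1 ∂μ = ∫ x, v x ∂μ₀ + ∫ p, fderiv ℝ v p.1 (f p.1 p.2) ∂μ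

/-- Feasibility of a triple `(μ₀, μ, μ̂₀)` for the continuous-time primal LP. -/
def FeasibleC {n m : ℕ} (X : Set (EuclideanSpace ℝ (Fin n)))
    (U : Set (EuclideanSpace ℝ (Fin m)))
    (f : EuclideanSpace ℝ (Fin n) → EuclideanSpace ℝ (Fin m) → EuclideanSpace ℝ (Fin n))
    (β : ℝ) (μ₀ : Measure (EuclideanSpace ℝ (Fin n)))
    (μ : Measure (EuclideanSpace ℝ (Fin n) × EuclideanSpace ℝ (Fin m)))
    (μh : Measure (EuclideanSpace ℝ (Fin n))) : Prop :=
  IsFiniteMeasure μ₀ ∧ IsFiniteMeasure μ ∧ IsFiniteMeasure μh ∧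
  msupport μ₀ ⊆ X ∧ msupport μh ⊆ X ∧ msupport μ ⊆ X ×ˢ U ∧
  LiouvilleC f β μ₀ μ ∧ μ₀ + μh = volume.restrict X

theorem IsCompact.convexHull_of_finiteDimensional {E : Type*} [NormedAddCommGroup E]
    [NormedSpace ℝ E] [FiniteDimensional ℝ E] {s : Set E} (hs : IsCompact s) :
    IsCompact (convexHull ℝ s) := by
  let κ := Fin (Module.finrank ℝ E + 1)
  have himage : convexHull ℝ s = (fun p : (κ → ℝ) × (κ → E) => ∑ i, p.1 i • p.2 i) ''
      (stdSimplex ℝ κ ×ˢ Set.univ.pi fun _ => s) := by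
    refine Set.Subset.antisymm (fun x hx => ?_) ?_
    · obtain ⟨ι, _, z, w, hz, hind, hw, hw1, rfl⟩ := eq_pos_convex_span_of_mem_convexHull hx
      obtain ⟨e⟩ : Nonempty (ι ↪ κ) := Function.Embedding.nonempty_of_card_le (by
        simpa [κ] using hind.card_le_finrank_succ.trans
          (Nat.succ_le_succ (Submodule.finrank_le (vectorSpan ℝ (Set.range z)))))
      obtain ⟨z₀, hz₀⟩ := convexHull_nonempty_iff.1 ⟨_, hx⟩
      have hout (j : κ) (hj : j ∉ Set.range e) : Function.extend e w 0 j = 0 :=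
        Function.extend_apply' _ _ _ hj
      refine ⟨(Function.extend e w 0, Function.extend e z fun _ => z₀), ⟨⟨fun j => ?_, ?_⟩,
        fun j _ => ?_⟩, ?_⟩
      · by_cases hj : j ∈ Set.range e
        · obtain ⟨i, rfl⟩ := hj
          simpa only [e.injective.extend_apply] using (hw i).le
        · exact (hout j hj).ge
      · rw [← hw1]
        exact (Fintype.sum_of_injective e e.injective w _ hout
          fun i => (e.injective.extend_apply _ _ _).symm).symm
      · by_cases hj : j ∈ Set.range e
        · obtain ⟨i, rfl⟩ := hj
          simp only [e.injective.extend_apply]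
          exact hz ⟨i, rfl⟩
        · simpa only [Function.extend_apply' _ _ _ hj] using hz₀
      · refine (Fintype.sum_of_injective e e.injective (fun i => w i • z i) _
          (fun j hj => ?_) fun i => ?_).symm
        · simp only [hout j hj, zero_smul]
        · simp only [e.injective.extend_apply]
    · rintro _ ⟨⟨w, z⟩, ⟨hw, hz⟩, rfl⟩
      exact (convex_convexHull ℝ s).sum_mem (fun i _ => hw.1 i) hw.2
        fun i _ => subset_convexHull ℝ s (hz i trivial)
  rw [himage]
  exact ((isCompact_stdSimplex ℝ κ).prod (isCompact_univ_pi fun _ => hs)).image (by fun_prop)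

/-- The fundamental theorem of calculus for Lipschitz curves. -/
theorem LipschitzWith.eq_add_integral_deriv {E : Type*} [NormedAddCommGroup E] [NormedSpace ℝ E]
    [FiniteDimensional ℝ E] {K : NNReal} {γ : ℝ → E} (hγ : LipschitzWith K γ) (a b : ℝ) :
    IntervalIntegrable (deriv γ) volume a b ∧ γ b = γ a + ∫ s in a..b, deriv γ s := by
  have : CompleteSpace E := FiniteDimensional.complete ℝ E
  have hint (a b : ℝ) : IntervalIntegrable (deriv γ) volume a b := by
    refine (intervalIntegrable_const (c := (K : ℝ))).mono_fun
      (aestronglyMeasurable_deriv γ _) (.of_forall fun t => ?_)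
    simpa using norm_deriv_le_of_lipschitz hγ
  refine ⟨hint a b, ?_⟩
  have hlip : LipschitzWith K fun t => ∫ s in a..t, deriv γ s := by
    refine LipschitzWith.of_dist_le_mul fun s t => ?_
    rw [dist_eq_norm, intervalIntegral.integral_interval_sub_left (hint a s) (hint a t),
      Real.dist_eq]
    exact intervalIntegral.norm_integral_le_of_norm_le_const
      fun _ _ => norm_deriv_le_of_lipschitz hγ
  have hac := (hγ.lipschitzOnWith (s := Set.uIcc a b)).absolutelyContinuousOnInterval.sub
    (hlip.lipschitzOnWith (s := Set.uIcc a b)).absolutelyContinuousOnInterval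
  obtain ⟨C, hC⟩ := hac.const_of_ae_hasDerivAt_zero (by
    filter_upwards [hγ.ae_differentiableAt_real, (hint a b).ae_hasDerivAt_integral] with t h1 h2 ht
    simpa using h1.hasDerivAt.sub (h2 ht a Set.left_mem_uIcc))
  have h := (hC b Set.right_mem_uIcc).trans (hC a Set.left_mem_uIcc).symm
  rw [Pi.sub_apply, Pi.sub_apply, intervalIntegral.integral_same, sub_zero] at h
  exact sub_eq_iff_eq_add.1 h

/-- Grönwall-type bound for a `C¹` function along an absolutely continuous curve. -/
theorem exp_mul_le_of_ae_fderiv_le {E : Type*} [NormedAddCommGroup E] [NormedSpace ℝ E]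
    [FiniteDimensional ℝ E] {x d : ℝ → E} {M T β : ℝ} (hT : 0 ≤ T)
    (hd : IntervalIntegrable d volume 0 T) (hM : ∀ᵐ t, t ∈ Set.Icc 0 T → ‖d t‖ ≤ M)
    (hx : ∀ t ∈ Set.Icc 0 T, x t = x 0 + ∫ s in (0 : ℝ)..t, d s)
    {v : E → ℝ} (hv : ContDiff ℝ 1 v)
    (hle : ∀ᵐ t, t ∈ Set.Icc 0 T → fderiv ℝ v (x t) (d t) ≤ β * v (x t)) :
    Real.exp (-β * T) * v (x T) ≤ v (x 0) := by
  have : CompleteSpace E := FiniteDimensional.complete ℝ E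
  have hsub {a b : ℝ} (ha : a ∈ Set.Icc 0 T) (hb : b ∈ Set.Icc 0 T) :
      IntervalIntegrable d volume a b :=
    hd.mono_set (by
      rw [Set.uIcc_of_le hT]; exact Set.uIcc_subset_Icc ha hb)
  have hlip : LipschitzOnWith M.toNNReal x (Set.Icc 0 T) := by
    refine LipschitzOnWith.of_dist_le_mul fun a ha b hb => ?_
    have h0 : (0 : ℝ) ∈ Set.Icc 0 T := ⟨le_rfl, hT⟩
    rw [dist_eq_norm, hx a ha, hx b hb, add_sub_add_left_eq_sub,
      intervalIntegral.integral_interval_sub_left (hsub h0 ha) (hsub h0 hb), Real.dist_eq]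
    refine intervalIntegral.norm_integral_le_of_norm_le_const_ae ?_
    filter_upwards [hM] with t ht htI
    exact (ht (Set.uIcc_subset_Icc hb ha (Set.uIoc_subset_uIcc htI))).trans
      (Real.le_coe_toNNReal M)
  obtain ⟨R, hR⟩ : ∃ R, x '' Set.Icc 0 T ⊆ Metric.closedBall 0 R :=
    (isCompact_Icc.image_of_continuousOn hlip.continuousOn).isBounded.subset_closedBall 0
  obtain ⟨L, hL⟩ := hv.contDiffOn.exists_lipschitzOnWith (by decide)
    (convex_closedBall (0 : E) R) (isCompact_closedBall 0 R)
  have hvx : LipschitzOnWith (L * M.toNNReal) (v ∘ x) (Set.uIcc 0 T) := by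
    rw [Set.uIcc_of_le hT]
    exact hL.comp hlip (Set.image_subset_iff.1 hR)
  have hexp : ContDiff ℝ 1 fun t : ℝ => Real.exp (-β * t) := by fun_prop
  have hac := (hexp.contDiffOn (s := Set.uIcc 0 T)).absolutelyContinuousOnInterval.mul
    hvx.absolutelyContinuousOnInterval
  have hftc := hac.integral_deriv_eq_sub
  have hnonpos : ∫ t in (0 : ℝ)..T,
      deriv ((fun t : ℝ => Real.exp (-β * t)) * (v ∘ x)) t ≤ 0 := by
    rw [intervalIntegral.integral_of_le hT]
    refine setIntegral_nonpos_of_ae_restrict ?_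
    have hne : ∀ a : ℝ, ∀ᵐ t : ℝ, t ≠ a := fun a => by simp [ae_iff, measure_singleton]
    rw [Filter.EventuallyLE, ae_restrict_iff' measurableSet_Ioc]
    filter_upwards [hle, hd.ae_hasDerivAt_integral, hne 0, hne T] with t h1 h2 h3 h4 ht'
    have ht := Set.Ioc_subset_Icc_self ht'
    have hderiv : HasDerivAt x (d t) t := by
      refine HasDerivAt.congr_of_eventuallyEq
        ((h2 (Set.Icc_subset_uIcc ht) 0 Set.left_mem_uIcc).const_add (x 0)) ?_
      filter_upwards [Icc_mem_nhds (lt_of_le_of_ne ht.1 h3.symm) (lt_of_le_of_ne ht.2 h4)]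
        with s hs using hx s hs
    have hvd : HasDerivAt (v ∘ x) (fderiv ℝ v (x t) (d t)) t :=
      ((hv.differentiable (by simp)) (x t)).hasFDerivAt.comp_hasDerivAt t hderiv
    have hed : HasDerivAt (fun t : ℝ => Real.exp (-β * t)) (Real.exp (-β * t) * (-β)) t := by
      simpa using ((hasDerivAt_id t).const_mul (-β)).exp
    rw [(hed.mul hvd).deriv]
    have := mul_le_mul_of_nonneg_left (h1 ht) (Real.exp_pos (-β * t)).le
    simp only [Function.comp, Pi.zero_apply]
    nlinarith
  rw [hftc] at hnonpos
  simpa using hnonpos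

/-- `EulerChain f X U ε t y` says that there is a polygonal curve of duration `t` starting at `y`,
each segment of which has a velocity `f x u` with `x ∈ X` within `ε` of both its end points. -/
inductive EulerChain {E F : Type*} [NormedAddCommGroup E] [NormedSpace ℝ E]
    (f : E → F → E) (X : Set E) (U : Set F) (ε : ℝ) : ℝ → E → Prop
  | nil (y : E) : EulerChain f X U ε 0 y
  | cons {s t : ℝ} {x y : E} {u : F} (hx : x ∈ X) (hu : u ∈ U) (hs : 0 ≤ s) (hy : dist x y < ε)
      (hy' : dist x (y + s • f x u) < ε) (ht : EulerChain f X U ε t (y + s • f x u)) :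
      EulerChain f X U ε (s + t) y

namespace EulerChain

section General

variable {E F : Type*} [NormedAddCommGroup E] [NormedSpace ℝ E]
  {f : E → F → E} {X : Set E} {U : Set F} {ε t : ℝ} {y : E}

theorem nonneg (h : EulerChain f X U ε t y) : 0 ≤ t := by
  induction h with
  | nil y => exact le_rfl
  | cons _ _ hs _ _ _ ih => exact add_nonneg hs ih

theorem mono {ε' : ℝ} (hε : ε ≤ ε') (h : EulerChain f X U ε t y) : EulerChain f X U ε' t y := by
  induction h with
  | nil y => exact .nil y
  | cons hx hu hs hy hy' _ ih => exact .cons hx hu hs (hy.trans_le hε) (hy'.trans_le hε) ih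

theorem isOpen_setOf (f : E → F → E) (X : Set E) (U : Set F) (ε t : ℝ) :
    IsOpen {y | EulerChain f X U ε t y} := by
  refine isOpen_iff_mem_nhds.2 fun y hy => ?_
  change EulerChain f X U ε t y at hy
  induction hy with
  | nil y => exact Filter.Eventually.of_forall .nil
  | @cons s t x y u hx hu hs hy hy' _ ih =>
    have hc : Filter.Tendsto (fun z => z + s • f x u) (nhds y) (nhds (y + s • f x u)) :=
      (continuous_id.add continuous_const).continuousAt
    have h1 : ∀ᶠ z in nhds y, dist x z < ε :=
      (continuous_const.dist continuous_id).continuousAt.eventually (gt_mem_nhds hy)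
    have h2 : ∀ᶠ z in nhds (y + s • f x u), dist x z < ε :=
      (continuous_const.dist continuous_id).continuousAt.eventually (gt_mem_nhds hy')
    filter_upwards [h1, hc.eventually h2, hc.eventually ih] with z hz1 hz2 hz3
    exact .cons hx hu hs hz1 hz2 hz3

/-- The discounted survival cost: the infimum of `exp (-β t)` over the durations `t` of the chains
starting at a point. -/
noncomputable def survivalCost (f : E → F → E) (X : Set E) (U : Set F) (ε β : ℝ) (y : E) : ℝ :=
  sInf ((fun t => Real.exp (-β * t)) '' {t | EulerChain f X U ε t y})

theorem bddBelow_image (f : E → F → E) (X : Set E) (U : Set F) (ε β : ℝ) (y : E) :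
    BddBelow ((fun t => Real.exp (-β * t)) '' {t | EulerChain f X U ε t y}) :=
  ⟨0, by rintro _ ⟨t, -, rfl⟩; exact (Real.exp_pos _).le⟩

theorem image_nonempty (f : E → F → E) (X : Set E) (U : Set F) (ε β : ℝ) (y : E) :
    ((fun t => Real.exp (-β * t)) '' {t | EulerChain f X U ε t y}).Nonempty :=
  ⟨_, 0, .nil y, rfl⟩

theorem survivalCost_nonneg (f : E → F → E) (X : Set E) (U : Set F) (ε β : ℝ) (y : E) :
    0 ≤ survivalCost f X U ε β y :=
  Real.sInf_nonneg (by rintro _ ⟨t, -, rfl⟩; exact (Real.exp_pos _).le)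

theorem survivalCost_le (h : EulerChain f X U ε t y) (β : ℝ) :
    survivalCost f X U ε β y ≤ Real.exp (-β * t) :=
  csInf_le (bddBelow_image f X U ε β y) ⟨t, h, rfl⟩

theorem survivalCost_le_one (f : E → F → E) (X : Set E) (U : Set F) (ε β : ℝ) (y : E) :
    survivalCost f X U ε β y ≤ 1 := by
  simpa using survivalCost_le (.nil y : EulerChain f X U ε 0 y) β

theorem survivalCost_lt_iff {β a : ℝ} :
    survivalCost f X U ε β y < a ↔ ∃ t, EulerChain f X U ε t y ∧ Real.exp (-β * t) < a := by
  rw [survivalCost, csInf_lt_iff (bddBelow_image f X U ε β y) (image_nonempty f X U ε β y)]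
  simp

theorem exp_mul_survivalCost_le {β s : ℝ} {x : E} {u : F} (hx : x ∈ X) (hu : u ∈ U) (hs : 0 ≤ s)
    (hy : dist x y < ε) (hy' : dist x (y + s • f x u) < ε) :
    Real.exp (β * s) * survivalCost f X U ε β y ≤ survivalCost f X U ε β (y + s • f x u) := by
  refine le_csInf (image_nonempty f X U ε β _) ?_
  rintro _ ⟨t, ht, rfl⟩
  calc Real.exp (β * s) * survivalCost f X U ε β y
      ≤ Real.exp (β * s) * Real.exp (-β * (s + t)) := by
        gcongr
        exact survivalCost_le (.cons hx hu hs hy hy' ht) β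
    _ = Real.exp (-β * t) := by rw [← Real.exp_add]; ring_nf

theorem measurable_survivalCost [MeasurableSpace E] [BorelSpace E]
    (f : E → F → E) (X : Set E) (U : Set F) (ε β : ℝ) : Measurable (survivalCost f X U ε β) := by
  refine measurable_of_Iio fun a => IsOpen.measurableSet ?_
  have : survivalCost f X U ε β ⁻¹' Set.Iio a =
      ⋃ t ∈ {t | Real.exp (-β * t) < a}, {y | EulerChain f X U ε t y} := by
    ext y
    simp [survivalCost_lt_iff, and_comm]
  rw [this]
  exact isOpen_biUnion fun t _ => isOpen_setOf f X U ε t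

end General

theorem _root_.HasDerivAt.nonneg_of_eventually_nonneg {g : ℝ → ℝ} {g' a : ℝ}
    (hg : HasDerivAt g g' a) (ha : g a = 0) (h : ∀ᶠ s in nhdsWithin a (Set.Ioi a), 0 ≤ g s) :
    0 ≤ g' := by
  refine ge_of_tendsto ((hasDerivWithinAt_iff_tendsto_slope' (by simp)).1
    (hg.hasDerivWithinAt (s := Set.Ioi a))) ?_
  filter_upwards [h, self_mem_nhdsWithin] with s hs hs'
  rw [slope_def_field, ha, sub_zero]
  exact div_nonneg hs (sub_nonneg.2 (le_of_lt hs'))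

/-- Mollifying the survival cost yields a smooth function that grows at rate `β` along the
controlled vector field and vanishes only near points from which chains of any duration start. -/
theorem exists_contDiff_growth {E F : Type*} [NormedAddCommGroup E] [NormedSpace ℝ E]
    [FiniteDimensional ℝ E] (f : E → F → E) (X : Set E) (U : Set F) {ε β : ℝ}
    (hε : 0 < ε) (hβ : 0 < β) :
    ∃ V : E → ℝ, ContDiff ℝ 1 V ∧ (∀ x, 0 ≤ V x) ∧
      (∀ x ∈ X, ∀ u ∈ U, β * V x ≤ fderiv ℝ V x (f x u)) ∧
      ∀ x, V x = 0 → ∀ T, ∃ y, dist y x < ε ∧ ∃ t, T ≤ t ∧ EulerChain f X U ε t y := by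
  borelize E
  let μ : Measure E := Measure.addHaar
  let φ : ContDiffBump (0 : E) := ⟨ε / 4, ε / 2, by positivity, by linarith⟩
  let w := survivalCost f X U ε β
  have hw : Measurable w := measurable_survivalCost f X U ε β
  have hwb (y : E) : ‖w y‖ ≤ 1 := by
    rw [Real.norm_of_nonneg (survivalCost_nonneg f X U ε β y)]
    exact survivalCost_le_one f X U ε β y
  have hint (x : E) : Integrable (fun z => φ.normed μ z * w (x - z)) μ :=
    φ.integrable_normed.mul_bdd (hw.comp (measurable_const.sub measurable_id)).aestronglyMeasurable
      (.of_forall fun z => hwb _)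
  have hnn (x z : E) : 0 ≤ φ.normed μ z * w (x - z) :=
    mul_nonneg (φ.nonneg_normed z) (survivalCost_nonneg f X U ε β _)
  have hwloc : LocallyIntegrable w μ := by
    refine (locallyIntegrable_const (1 : ℝ)).mono hw.aestronglyMeasurable
      (.of_forall fun z => ?_)
    simpa using hwb z
  let V : E → ℝ := fun x => ∫ z, φ.normed μ z * w (x - z) ∂μ
  have hV : ContDiff ℝ 1 V :=
    φ.hasCompactSupport_normed.contDiff_convolution_left (n := 1)
      (ContinuousLinearMap.mul ℝ ℝ) φ.contDiff_normed hwloc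
  have hsupp (z : E) (hz : ε / 2 ≤ ‖z‖) : φ.normed μ z = 0 := by
    have : z ∉ Function.support (φ.normed μ) := by
      rw [φ.support_normed_eq]
      simpa [φ] using hz
    simpa using this
  have hstep {x : E} {u : F} (hx : x ∈ X) (hu : u ∈ U) {s : ℝ} (hs : 0 ≤ s)
      (hs' : s * ‖f x u‖ < ε / 2) : Real.exp (β * s) * V x ≤ V (x + s • f x u) := by
    rw [← integral_const_mul]
    refine integral_mono ((hint x).const_mul _) (hint _) fun z => ?_
    rcases le_or_gt (ε / 2) ‖z‖ with hz | hz
    · simp [hsupp z hz]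
    · have h1 : dist x (x - z) < ε := by
        rw [dist_eq_norm]; simpa using hz.trans (half_lt_self hε)
      have h2 : dist x (x - z + s • f x u) < ε := by
        rw [dist_eq_norm, show x - (x - z + s • f x u) = z - s • f x u by abel]
        refine (norm_sub_le _ _).trans_lt ?_
        rw [norm_smul, Real.norm_of_nonneg hs]
        linarith
      have h3 := exp_mul_survivalCost_le (β := β) hx hu hs h1 h2
      have h4 := mul_le_mul_of_nonneg_left h3 (φ.nonneg_normed (μ := μ) z)
      rw [show x - z + s • f x u = x + s • f x u - z by abel] at h4
      calc Real.exp (β * s) * (φ.normed μ z * w (x - z))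
          = φ.normed μ z * (Real.exp (β * s) * w (x - z)) := by ring
        _ ≤ _ := h4
  refine ⟨V, hV, fun x => integral_nonneg (hnn x), fun x hx u hu => ?_, fun x hx T => ?_⟩
  · have hd1 : HasDerivAt (fun s : ℝ => V (x + s • f x u)) (fderiv ℝ V x (f x u)) 0 := by
      have hl : HasDerivAt (fun s : ℝ => x + s • f x u) (f x u) 0 := by
        simpa using ((hasDerivAt_id (0 : ℝ)).smul_const (f x u)).const_add x
      have hVd : HasFDerivAt V (fderiv ℝ V x) (x + (0 : ℝ) • f x u) := by
        simpa using (hV.differentiable (by simp) x).hasFDerivAt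
      exact hVd.comp_hasDerivAt 0 hl
    have hd2 : HasDerivAt (fun s : ℝ => Real.exp (β * s) * V x) (β * V x) 0 := by
      simpa using (((hasDerivAt_id (0 : ℝ)).const_mul β).exp).mul_const (V x)
    refine sub_nonneg.1 ((hd1.sub hd2).nonneg_of_eventually_nonneg (by simp) ?_)
    have hsm : ∀ᶠ s : ℝ in nhds 0, s * ‖f x u‖ < ε / 2 :=
      (continuous_id.mul continuous_const).continuousAt.eventually
        (gt_mem_nhds (by simpa using hε))
    filter_upwards [nhdsWithin_le_nhds hsm, self_mem_nhdsWithin] with s hs hs0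
    exact sub_nonneg.2 (hstep hx hu (le_of_lt hs0) hs)
  · have hae := (integral_eq_zero_iff_of_nonneg (hnn x) (hint x)).1 hx
    obtain ⟨z, hz, hz0⟩ := (Measure.dense_of_ae hae).exists_mem_open Metric.isOpen_ball
      ⟨(0 : E), Metric.mem_ball_self (half_pos hε)⟩
    have hφ : φ.normed μ z ≠ 0 := by
      have : z ∈ Function.support (φ.normed μ) := by rw [φ.support_normed_eq]; exact hz0
      exact this
    have hw0 : w (x - z) = 0 := by simpa [hφ] using hz
    obtain ⟨t, ht, htT⟩ := survivalCost_lt_iff.1 (hw0.trans_lt (Real.exp_pos (-β * T)))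
    refine ⟨x - z, ?_, t, ?_, ht⟩
    · have : ‖z‖ < ε / 2 := by simpa using hz0
      rw [dist_eq_norm]
      simpa using this.trans (half_lt_self hε)
    · have := Real.exp_lt_exp.1 htT
      nlinarith

end EulerChain

/-- The velocities available at the points of `X` within distance `r` of `c`. -/
def nearVelocities {E F : Type*} [PseudoMetricSpace E] (f : E → F → E) (X : Set E) (U : Set F)
    (c : E) (r : ℝ) : Set E :=
  {p | ∃ x ∈ X, ∃ u ∈ U, dist x c ≤ r ∧ f x u = p}

theorem nearVelocities_mono {E F : Type*} [PseudoMetricSpace E] (f : E → F → E) (X : Set E)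
    (U : Set F) {c c' : E} {r r' : ℝ} (h : r + dist c c' ≤ r') :
    nearVelocities f X U c r ⊆ nearVelocities f X U c' r' := by
  rintro _ ⟨x, hx, u, hu, hd, rfl⟩
  exact ⟨x, hx, u, hu, by linarith [dist_triangle x c c'], rfl⟩

section Curves

variable {E F : Type*} [NormedAddCommGroup E] [NormedSpace ℝ E]
  {f : E → F → E} {X : Set E} {U : Set F} {M : ℝ}

theorem norm_le_of_mem_convexHull_nearVelocities (hM : ∀ x ∈ X, ∀ u ∈ U, ‖f x u‖ ≤ M) {c p : E}
    {r : ℝ} (hp : p ∈ convexHull ℝ (nearVelocities f X U c r)) : ‖p‖ ≤ M := by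
  have : convexHull ℝ (nearVelocities f X U c r) ⊆ Metric.closedBall 0 M := by
    refine convexHull_min ?_ (convex_closedBall 0 M)
    rintro _ ⟨x, hx, u, hu, -, rfl⟩
    simpa using hM x hx u hu
  simpa using this hp

theorem dist_le_of_norm_slope_le {γ : ℝ → E} {a b : ℝ} (hab : a < b)
    (h : ‖slope γ a b‖ ≤ M) : dist (γ a) (γ b) ≤ M * (b - a) := by
  rw [dist_comm, dist_eq_norm, ← vsub_eq_sub, ← sub_smul_slope γ a b, norm_smul,
    Real.norm_of_nonneg (sub_pos.2 hab).le, mul_comm]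
  exact mul_le_mul_of_nonneg_right h (sub_pos.2 hab).le

theorem EulerChain.exists_curve (hM : ∀ x ∈ X, ∀ u ∈ U, ‖f x u‖ ≤ M) {ε t : ℝ} {y : E}
    (h : EulerChain f X U ε t y) :
    ∃ γ : ℝ → E, γ 0 = y ∧ ∀ a b, 0 ≤ a → a < b → b ≤ t →
      slope γ a b ∈ convexHull ℝ (nearVelocities f X U (γ a) (M * (b - a) + ε)) := by
  induction h with
  | nil y => exact ⟨fun _ => y, rfl, fun a b ha hab hb => by linarith⟩
  | @cons s t x y u hx hu hs hy hy' _ ih =>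
    obtain ⟨γ', h0, hγ'⟩ := ih
    have hM0 : 0 ≤ M := (norm_nonneg _).trans (hM x hx u hu)
    let γ : ℝ → E := fun r => if r ≤ s then y + r • f x u else γ' (r - s)
    have hγ1 {r : ℝ} (hr : r ≤ s) : γ r = y + r • f x u := if_pos hr
    have hγ2 {r : ℝ} (hr : s ≤ r) : γ r = γ' (r - s) := by
      rcases hr.eq_or_lt with rfl | hr
      · simp [γ, h0]
      · exact if_neg hr.not_ge
    have hnear {a b : ℝ} (ha : 0 ≤ a) (hab : a ≤ b) (has : a ≤ s) :
        f x u ∈ nearVelocities f X U (γ a) (M * (b - a) + ε) := by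
      refine ⟨x, hx, u, hu, ?_, rfl⟩
      have hmem : γ a ∈ Metric.ball x ε := by
        rcases hs.eq_or_lt with rfl | hs
        · rw [hγ1 has, le_antisymm has ha]
          simpa [dist_comm] using hy
        · refine (convex_ball x ε).segment_subset
            (Metric.mem_ball'.2 hy) (Metric.mem_ball'.2 hy') ?_
          rw [segment_eq_image']
          refine ⟨a / s, ⟨by positivity, div_le_one_of_le₀ has hs.le⟩, ?_⟩
          simp only [add_sub_cancel_left, smul_smul, hγ1 has]
          rw [div_mul_cancel₀ _ hs.ne']
      have := Metric.mem_ball'.1 hmem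
      nlinarith [mul_nonneg hM0 (sub_nonneg.2 hab)]
    have hslope1 {a b : ℝ} (hab : a < b) (hb : b ≤ s) : slope γ a b = f x u := by
      rw [slope_def_module, hγ1 hb, hγ1 (hab.le.trans hb), add_sub_add_left_eq_sub, ← sub_smul,
        smul_smul, inv_mul_cancel₀ (sub_pos.2 hab).ne', one_smul]
    have hslope2 {a b : ℝ} (ha : s ≤ a) (hab : a < b) :
        slope γ a b = slope γ' (a - s) (b - s) := by
      rw [slope_def_module, slope_def_module, hγ2 ha, hγ2 (ha.trans hab.le),
        sub_sub_sub_cancel_right]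
    refine ⟨γ, by simp [hγ1 hs], fun a b ha hab hb => ?_⟩
    rcases le_or_gt s a with hsa | has
    · have := hγ' (a - s) (b - s) (by linarith) (by linarith) (by linarith)
      rwa [← hslope2 hsa hab, ← hγ2 hsa, sub_sub_sub_cancel_right] at this
    · rcases le_or_gt b s with hbs | hsb
      · rw [hslope1 hab hbs]
        exact subset_convexHull ℝ _ (hnear ha hab.le has.le)
      · have h1 := hγ' 0 (b - s) le_rfl (by linarith) (by linarith)
        have h2 : slope γ s b ∈ convexHull ℝ (nearVelocities f X U (γ a) (M * (b - a) + ε)) := by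
          rw [hslope2 le_rfl hsb, sub_self]
          refine convexHull_mono (nearVelocities_mono f X U ?_) h1
          have hd : dist (γ a) (γ s) ≤ M * (s - a) := by
            refine dist_le_of_norm_slope_le has ?_
            rw [hslope1 has le_rfl]
            exact hM x hx u hu
          have : γ' 0 = γ s := by rw [hγ2 le_rfl, sub_self]
          rw [this, dist_comm]
          linarith
        have h3 : slope γ a s ∈ convexHull ℝ (nearVelocities f X U (γ a) (M * (b - a) + ε)) := by
          rw [hslope1 has le_rfl]
          exact subset_convexHull ℝ _ (hnear ha hab.le has.le)
        rw [← sub_div_sub_smul_slope_add_sub_div_sub_smul_slope γ a s b]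
        have hba : 0 < b - a := sub_pos.2 hab
        refine convex_convexHull ℝ _ h3 h2 (div_nonneg (by linarith) hba.le)
          (div_nonneg (by linarith) hba.le) ?_
        rw [← add_div, div_eq_one_iff_eq hba.ne']
        ring

variable [FiniteDimensional ℝ E]

theorem exists_limit_curve (hM : ∀ x ∈ X, ∀ u ∈ U, ‖f x u‖ ≤ M) {x₀ : E}
    (h : ∀ ε > 0, ∀ T, ∃ y, dist y x₀ < ε ∧ ∃ t, T ≤ t ∧ EulerChain f X U ε t y) :
    ∃ γ : ℝ → E, γ 0 = x₀ ∧ ∀ a b η, 0 ≤ a → a < b → M * (b - a) < η →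
      slope γ a b ∈ closure (convexHull ℝ (nearVelocities f X U (γ a) η)) := by
  have hk (k : ℕ) : ∃ γ : ℝ → E, dist (γ 0) x₀ < 1 / (k + 1 : ℝ) ∧ ∀ a b : ℝ, 0 ≤ a → a < b →
      b ≤ k → slope γ a b ∈
        convexHull ℝ (nearVelocities f X U (γ a) (M * (b - a) + 1 / (k + 1 : ℝ))) := by
    obtain ⟨y, hy, t, ht, hc⟩ := h (1 / (k + 1 : ℝ)) Nat.one_div_pos_of_nat k
    obtain ⟨γ, h0, hγ⟩ := hc.exists_curve hM
    exact ⟨γ, h0.symm ▸ hy, fun a b ha hab hb => hγ a b ha hab (hb.trans ht)⟩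
  choose γ hγ0 hγ using hk
  let 𝒰 : Ultrafilter ℕ := Filter.hyperfilter ℕ
  have h𝒰 : (𝒰 : Filter ℕ) ≤ Filter.atTop := Nat.hyperfilter_le_atTop
  have hsmall : Filter.Tendsto (fun k : ℕ => 1 / (k + 1 : ℝ)) 𝒰 (nhds 0) :=
    tendsto_one_div_add_atTop_nhds_zero_nat.mono_left h𝒰
  have hlarge (b : ℝ) : ∀ᶠ k : ℕ in 𝒰, b ≤ k :=
    h𝒰 (tendsto_natCast_atTop_atTop.eventually_ge_atTop b)
  have hγ0lim : Filter.Tendsto (fun k => γ k 0) 𝒰 (nhds x₀) :=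
    tendsto_iff_dist_tendsto_zero.2
      (squeeze_zero (fun _ => dist_nonneg) (fun k => (hγ0 k).le) hsmall)
  have hlim (t : ℝ) : ∃ z, 0 ≤ t → Filter.Tendsto (fun k => γ k t) 𝒰 (nhds z) := by
    rcases lt_trichotomy t 0 with ht | rfl | ht
    · exact ⟨0, fun h => absurd h ht.not_ge⟩
    · exact ⟨x₀, fun _ => hγ0lim⟩
    · have hb : ∀ᶠ k in (𝒰 : Filter ℕ), γ k t ∈ Metric.closedBall x₀ (M * t + 1) := by
        filter_upwards [hlarge t, hsmall.eventually (gt_mem_nhds one_pos)] with k hk hk1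
        have h1 := dist_le_of_norm_slope_le ht
          (norm_le_of_mem_convexHull_nearVelocities hM (hγ k 0 t le_rfl ht hk))
        rw [Metric.mem_closedBall]
        have h2 := dist_triangle_left (γ k t) x₀ (γ k 0)
        rw [sub_zero] at h1
        linarith [hγ0 k]
      obtain ⟨z, -, hz⟩ := (isCompact_closedBall x₀ (M * t + 1)).ultrafilter_le_nhds
        (𝒰.map fun k => γ k t) (Filter.le_principal_iff.2 hb)
      exact ⟨z, fun _ => hz⟩
  choose Γ hΓ using hlim
  refine ⟨Γ, tendsto_nhds_unique (hΓ 0 le_rfl) hγ0lim, fun a b η ha hab hη => ?_⟩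
  have hs : Filter.Tendsto (fun k => slope (γ k) a b) 𝒰 (nhds (slope Γ a b)) := by
    simp only [slope_def_module]
    exact ((hΓ b (ha.trans hab.le)).sub (hΓ a ha)).const_smul _
  refine mem_closure_of_tendsto hs ?_
  have hd : Filter.Tendsto (fun k : ℕ => M * (b - a) + 1 / (k + 1 : ℝ) + dist (γ k a) (Γ a)) 𝒰
      (nhds (M * (b - a) + 0 + 0)) :=
    (hsmall.const_add _).add (tendsto_iff_dist_tendsto_zero.1 (hΓ a ha))
  filter_upwards [hlarge b, hd.eventually (gt_mem_nhds (by simpa using hη))] with k hk hk1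
  exact convexHull_mono (nearVelocities_mono f X U hk1.le) (hγ k a b ha hab hk)

/-- Points near which Euler chains of arbitrary precision and duration start are starting points
of trajectories of the convexified differential inclusion that remain in `X`. -/
theorem exists_trajectory_of_eulerChain [PseudoMetricSpace F] (hX : IsCompact X) (hU : IsCompact U)
    (hf : Continuous fun p : E × F => f p.1 p.2) {x₀ : E}
    (h : ∀ ε > 0, ∀ T, ∃ y, dist y x₀ < ε ∧ ∃ t, T ≤ t ∧ EulerChain f X U ε t y) :
    ∃ (K : NNReal) (γ : ℝ → E), LipschitzWith K γ ∧ γ 0 = x₀ ∧ (∀ t, 0 ≤ t → γ t ∈ X) ∧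
      ∀ t, 0 < t → DifferentiableAt ℝ γ t → deriv γ t ∈ convexHull ℝ (f (γ t) '' U) := by
  obtain ⟨R, hR⟩ := (hX.prod hU).exists_bound_of_continuousOn hf.continuousOn
  let M : NNReal := R.toNNReal
  have hM : ∀ x ∈ X, ∀ u ∈ U, ‖f x u‖ ≤ M := fun x hx u hu =>
    (hR (x, u) ⟨hx, hu⟩).trans (Real.le_coe_toNNReal R)
  obtain ⟨γ, h0, hγ⟩ := exists_limit_curve hM h
  have hmem {t : ℝ} (ht : 0 ≤ t) : γ t ∈ X := by
    rw [← hX.isClosed.closure_eq, Metric.mem_closure_iff]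
    intro η hη
    obtain ⟨b, hb, hbη⟩ : ∃ b, t < b ∧ M * (b - t) < η / 2 := by
      refine ⟨t + η / (2 * (M + 1)), by simp; positivity, ?_⟩
      rw [add_sub_cancel_left, mul_div_assoc', div_lt_div_iff₀ (by positivity) two_pos]
      nlinarith
    obtain ⟨_, hq⟩ := closure_nonempty_iff.1 ⟨_, hγ t b _ ht hb hbη⟩
    obtain ⟨_, x, hx, -, -, hd, -⟩ := convexHull_nonempty_iff.1 ⟨_, hq⟩
    exact ⟨x, hx, by rw [dist_comm]; linarith⟩
  have hdist {a b : ℝ} (ha : 0 ≤ a) (hab : a < b) : dist (γ a) (γ b) ≤ M * (b - a) := by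
    refine dist_le_of_norm_slope_le hab ?_
    have : closure (convexHull ℝ (nearVelocities f X U (γ a) (M * (b - a) + 1))) ⊆
        Metric.closedBall 0 M :=
      closure_minimal (fun p hp => by
        simpa using norm_le_of_mem_convexHull_nearVelocities hM hp) Metric.isClosed_closedBall
    simpa using this (hγ a b _ ha hab (by linarith))
  refine ⟨M, fun t => γ (max t 0), ?_, by simpa using h0, fun t _ => hmem (le_max_right _ _),
    fun t ht hdiff => ?_⟩
  · have : LipschitzOnWith M γ (Set.Ici 0) := by
      refine LipschitzOnWith.of_dist_le_mul fun a ha b hb => ?_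
      rcases lt_trichotomy a b with hab | rfl | hab
      · rw [dist_comm a b, Real.dist_eq, abs_of_pos (sub_pos.2 hab)]
        exact hdist ha hab
      · simp
      · rw [Real.dist_eq, abs_of_pos (sub_pos.2 hab), dist_comm]
        exact hdist hb hab
    refine lipschitzOnWith_univ.1 ?_
    have h2 := this.comp ((LipschitzWith.id.max_const (0 : ℝ)).lipschitzOnWith (s := Set.univ))
      (fun t _ => le_max_right t 0)
    simpa [Function.comp_def] using h2
  · simp only [max_eq_left ht.le]
    have hcomp : IsCompact (convexHull ℝ (f (γ t) '' U)) :=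
      (hU.image (hf.comp (Continuous.prodMk_right (γ t)))).convexHull_of_finiteDimensional
    rw [← hcomp.isClosed.closure_eq, Metric.closure_eq_iInter_cthickening]
    refine Set.mem_iInter₂.2 fun δ hδ => ?_
    obtain ⟨η, hη, hηf⟩ := Metric.uniformContinuousOn_iff.1
      ((hX.prod hU).uniformContinuousOn_of_continuous hf.continuousOn) δ hδ
    have hsub : closure (convexHull ℝ (nearVelocities f X U (γ t) (η / 2))) ⊆
        Metric.cthickening δ (convexHull ℝ (f (γ t) '' U)) := by
      refine closure_minimal (convexHull_min ?_ ((convex_convexHull ℝ _).cthickening δ))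
        Metric.isClosed_cthickening
      rintro _ ⟨x, hx, u, hu, hd, rfl⟩
      refine Metric.mem_cthickening_of_dist_le _ (f (γ t) u) δ _
        (subset_convexHull ℝ _ ⟨u, hu, rfl⟩) (hηf (x, u) ⟨hx, hu⟩ (γ t, u) ⟨hmem ht.le, hu⟩ ?_).le
      rw [Prod.dist_eq, dist_self, max_eq_left dist_nonneg]
      exact hd.trans_lt (half_lt_self hη)
    have hslope := (hasDerivWithinAt_iff_tendsto_slope' (by simp)).1
      (hdiff.hasDerivAt.hasDerivWithinAt (s := Set.Ioi t))
    refine Metric.isClosed_cthickening.mem_of_tendsto hslope ?_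
    have hsm : ∀ᶠ b in nhds t, M * (b - t) < η / 2 := by
      have hc : Continuous fun b : ℝ => (M : ℝ) * (b - t) := by fun_prop
      exact hc.continuousAt.eventually (gt_mem_nhds (by simpa using half_pos hη))
    filter_upwards [nhdsWithin_le_nhds hsm, self_mem_nhdsWithin] with b hb htb
    have htb' : t < b := htb
    have := hsub (hγ t b _ ht.le htb' hb)
    simpa [slope_def_module, max_eq_left ht.le, max_eq_left (ht.trans htb').le] using this

end Curves

section Liouville

open scoped CompactlySupported

variable {E F : Type*} [NormedAddCommGroup E] [NormedSpace ℝ E] [TopologicalSpace F]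
  {f : E → F → E} {X : Set E} {U : Set F} {β : ℝ}

theorem ContDiff.continuous_fderiv_uncurry {v : E → ℝ} (hv : ContDiff ℝ 1 v)
    (hf : Continuous fun p : E × F => f p.1 p.2) :
    Continuous fun p : E × F => fderiv ℝ v p.1 (f p.1 p.2) :=
  ((hv.continuous_fderiv (by simp)).comp continuous_fst).clm_apply hf

variable (E) in
/-- The space of continuously differentiable real functions. -/
def contDiffOneSubmodule : Submodule ℝ (E → ℝ) where
  carrier := {v | ContDiff ℝ 1 v}
  add_mem' {v w} (hv : ContDiff ℝ 1 v) (hw : ContDiff ℝ 1 w) := hv.add hw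
  zero_mem' := (contDiff_const : ContDiff ℝ 1 fun _ : E => (0 : ℝ))
  smul_mem' _ v (hv : ContDiff ℝ 1 v) := contDiff_const.smul hv

theorem contDiffOneSubmodule.contDiff (v : contDiffOneSubmodule E) : ContDiff ℝ 1 v.1 := v.2

/-- The discounted generator `v ↦ β v - ∇v · f` as a linear map from `C¹` functions to continuous
functions on a compact set. -/
noncomputable def discountedGenerator (β : ℝ) (hf : Continuous fun p : E × F => f p.1 p.2)
    (K : Set (E × F)) [CompactSpace K] :
    contDiffOneSubmodule E →ₗ[ℝ] C_c(K, ℝ) where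
  toFun v :=
    { toFun := fun p => β * v.1 p.1.1 - fderiv ℝ v.1 p.1.1 (f p.1.1 p.1.2)
      continuous_toFun := by
        have h1 := (contDiffOneSubmodule.contDiff v).continuous
        have h2 := (contDiffOneSubmodule.contDiff v).continuous_fderiv_uncurry hf
        exact (continuous_const.mul (h1.comp (continuous_fst.comp continuous_subtype_val))).sub
          (h2.comp continuous_subtype_val)
      hasCompactSupport' := HasCompactSupport.of_compactSpace _ }
  map_add' v w := by
    ext p
    have hv := (contDiffOneSubmodule.contDiff v).differentiable (by simp) p.1.1
    have hw := (contDiffOneSubmodule.contDiff w).differentiable (by simp) p.1.1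
    change β * (v.1 p.1.1 + w.1 p.1.1) - fderiv ℝ (v.1 + w.1) p.1.1 _ = _ + _
    rw [fderiv_add hv hw, add_apply]
    simp only [CompactlySupportedContinuousMap.coe_mk, ContinuousMap.coe_mk]
    ring
  map_smul' c v := by
    ext p
    have hv := (contDiffOneSubmodule.contDiff v).differentiable (by simp) p.1.1
    change β * (c * v.1 p.1.1) - fderiv ℝ (c • v.1) p.1.1 _ = c * _
    rw [fderiv_const_smul hv, smul_apply, smul_eq_mul]
    simp only [CompactlySupportedContinuousMap.coe_mk, ContinuousMap.coe_mk]
    ring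

/-- If every `C¹` function `v` with `∇v · f ≤ β v` on `X × U` is nonnegative on a compact set `S`,
then a locally finite measure on `S` is the initial measure of a solution of the discounted
Liouville equation. -/
theorem exists_measure_discounted_liouville [T2Space F] [MeasurableSpace E] [BorelSpace E]
    [MeasurableSpace F] [BorelSpace F] [SecondCountableTopologyEither E F]
    (μ₀ : Measure E) [IsFiniteMeasureOnCompacts μ₀] {S : Set E} (hS : IsCompact S)
    (hX : IsCompact X) (hU : IsCompact U) (hf : Continuous fun p : E × F => f p.1 p.2)
    (hβ : 0 < β)
    (h : ∀ v : E → ℝ, ContDiff ℝ 1 v → (∀ x ∈ X, ∀ u ∈ U, fderiv ℝ v x (f x u) ≤ β * v x) →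
      ∀ x ∈ S, 0 ≤ v x) :
    ∃ μ : Measure (E × F), IsFiniteMeasure μ ∧ μ (X ×ˢ U)ᶜ = 0 ∧
      ∀ v : E → ℝ, ContDiff ℝ 1 v → β * ∫ p, v p.1 ∂μ =
        ∫ x in S, v x ∂μ₀ + ∫ p, fderiv ℝ v p.1 (f p.1 p.2) ∂μ := by
  have hKc : IsCompact (X ×ˢ U) := hX.prod hU
  have : CompactSpace ↥(X ×ˢ U) := isCompact_iff_compactSpace.1 hKc
  let A := discountedGenerator β hf (X ×ˢ U)
  have hA (v : contDiffOneSubmodule E) (p : ↥(X ×ˢ U)) :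
      A v p = β * v.1 p.1.1 - fderiv ℝ v.1 p.1.1 (f p.1.1 p.1.2) := rfl
  have hint {v : E → ℝ} (hv : ContDiff ℝ 1 v) : IntegrableOn v S μ₀ :=
    hv.continuous.continuousOn.integrableOn_compact hS
  let L : contDiffOneSubmodule E →ₗ[ℝ] ℝ :=
    { toFun := fun v => ∫ x in S, v.1 x ∂μ₀
      map_add' := fun v w => integral_add (hint v.2) (hint w.2)
      map_smul' := fun c v => integral_const_mul c _ }
  have hL (v : contDiffOneSubmodule E) (hv : ∀ p, 0 ≤ A v p) : 0 ≤ L v :=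
    setIntegral_nonneg hS.measurableSet <|
      h v.1 v.2 fun x hx u hu => sub_nonneg.1 (hv ⟨(x, u), hx, hu⟩)
  have hker : LinearMap.ker A ≤ LinearMap.ker L := fun v hv => by
    have hv : A v = 0 := hv
    refine le_antisymm ?_ (hL v fun p => by simp [hv])
    have := hL (-v) fun p => by simp [hv]
    rwa [map_neg, neg_nonneg] at this
  let Lp : C_c(↥(X ×ˢ U), ℝ) →ₗ.[ℝ] ℝ :=
    ⟨LinearMap.range A, ((LinearMap.ker A).liftQ L hker) ∘ₗ A.quotKerEquivRange.symm.toLinearMap⟩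
  have hLp (v : contDiffOneSubmodule E) (hv : A v ∈ LinearMap.range A) : Lp ⟨A v, hv⟩ = L v := by
    change (LinearMap.ker A).liftQ L hker (A.quotKerEquivRange.symm ⟨A v, hv⟩) = L v
    rw [LinearMap.quotKerEquivRange_symm_apply_image]
    rfl
  let C : PointedCone ℝ C_c(↥(X ×ˢ U), ℝ) :=
    { carrier := {g | ∀ p, 0 ≤ g p}
      add_mem' := fun ha hb p => add_nonneg (ha p) (hb p)
      zero_mem' := fun p => le_rfl
      smul_mem' := fun c _ hg p => mul_nonneg c.2 (hg p) }
  obtain ⟨Λ, hΛ, hΛC⟩ := riesz_extension C Lp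
    (by
      rintro ⟨_, v, rfl⟩ hv
      exact (hL v hv).trans_eq (hLp v _).symm)
    (fun g => by
      obtain ⟨c, hc⟩ := isCompact_univ.exists_bound_of_continuousOn (map_continuous g).continuousOn
      refine ⟨⟨_, ⟨fun _ => c / β, (contDiff_const : ContDiff ℝ 1 fun _ : E => c / β)⟩, rfl⟩,
        fun p => ?_⟩
      have h1 := neg_le_of_abs_le (hc p trivial)
      change 0 ≤ A _ p + g p
      rw [hA, fderiv_const_apply, mul_div_cancel₀ _ hβ.ne']
      simpa using by linarith)
  let Λ' : C_c(↥(X ×ˢ U), ℝ) →ₚ[ℝ] ℝ := PositiveLinearMap.mk₀ Λ fun g hg => hΛC g hg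
  let ν := RealRMK.rieszMeasure Λ'
  have hemb : MeasurableEmbedding ((↑) : ↥(X ×ˢ U) → E × F) :=
    .subtype_coe hKc.measurableSet
  refine ⟨ν.map (↑), inferInstance, ?_, fun v hv => ?_⟩
  · rw [hemb.map_apply]
    simp
  · have hv' := hv.continuous_fderiv_uncurry hf
    have hgen := RealRMK.integral_rieszMeasure Λ' (A ⟨v, hv⟩)
    have hval : Λ' (A ⟨v, hv⟩) = ∫ x in S, v x ∂μ₀ :=
      (hΛ ⟨A ⟨v, hv⟩, ⟨v, hv⟩, rfl⟩).trans (hLp ⟨v, hv⟩ _)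
    have hi1 : Integrable (fun p : ↥(X ×ˢ U) => β * v p.1.1) ν :=
      (Continuous.integrable_of_hasCompactSupport (by have := hv.continuous; fun_prop)
        (HasCompactSupport.of_compactSpace _))
    have hi2 : Integrable (fun p : ↥(X ×ˢ U) => fderiv ℝ v p.1.1 (f p.1.1 p.1.2)) ν :=
      (hv'.comp continuous_subtype_val).integrable_of_hasCompactSupport
        (HasCompactSupport.of_compactSpace _)
    rw [hval] at hgen
    simp only [hA] at hgen
    rw [integral_sub hi1 hi2, integral_const_mul] at hgen
    rw [hemb.integral_map, hemb.integral_map]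
    linarith

end Liouville

theorem MeasureTheory.measure_compl_eq_zero_of_msupport_subset {α : Type*} [TopologicalSpace α]
    [SecondCountableTopology α] [MeasurableSpace α] {μ : Measure α} {K : Set α}
    (h : msupport μ ⊆ K) : μ Kᶜ = 0 := by
  refine measure_null_of_locally_null _ fun x hx => ?_
  have hx' : x ∉ msupport μ := fun hx' => hx (h hx')
  simp only [msupport, Set.mem_ofPred_eq, not_forall, not_lt, nonpos_iff_eq_zero] at hx'
  obtain ⟨s, hs, hxs, h0⟩ := hx'
  exact ⟨s, mem_nhdsWithin_of_mem_nhds (hs.mem_nhds hxs), h0⟩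

theorem IsClosed.msupport_subset {α : Type*} [TopologicalSpace α] [MeasurableSpace α]
    {μ : Measure α} {K : Set α} (hK : IsClosed K) (h : μ Kᶜ = 0) : msupport μ ⊆ K := by
  intro x hx
  by_contra hxK
  exact (hx Kᶜ hK.isOpen_compl hxK).ne' h

theorem MeasureTheory.Measure.integrable_of_measure_compl_eq_zero {α E : Type*}
    [TopologicalSpace α] [T2Space α] [MeasurableSpace α] [BorelSpace α] [NormedAddCommGroup E]
    {μ : Measure α} [IsFiniteMeasureOnCompacts μ] {K : Set α} (hK : IsCompact K) (h : μ Kᶜ = 0)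
    {g : α → E} [SecondCountableTopologyEither α E] (hg : Continuous g) : Integrable g μ := by
  rw [← Measure.restrict_eq_self_of_ae_mem (μ := μ) (s := K) (mem_ae_iff.2 h)]
  exact hg.continuousOn.integrableOn_compact hK

section MCI

variable {n m : ℕ} {X : Set (EuclideanSpace ℝ (Fin n))} {U : Set (EuclideanSpace ℝ (Fin m))}
  {f : EuclideanSpace ℝ (Fin n) → EuclideanSpace ℝ (Fin m) → EuclideanSpace ℝ (Fin n)} {β : ℝ}

theorem mciC_subset : mciC X U f ⊆ X := by
  rintro _ ⟨x, hx, rfl⟩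
  exact hx.1 0 le_rfl

theorem nonneg_of_mem_mciC (hX : IsCompact X) (hU : IsCompact U)
    (hf : Continuous fun p : EuclideanSpace ℝ (Fin n) × EuclideanSpace ℝ (Fin m) => f p.1 p.2)
    (hβ : 0 < β) {v : EuclideanSpace ℝ (Fin n) → ℝ} (hv : ContDiff ℝ 1 v)
    (hle : ∀ x ∈ X, ∀ u ∈ U, fderiv ℝ v x (f x u) ≤ β * v x) {x₀ : EuclideanSpace ℝ (Fin n)}
    (hx₀ : x₀ ∈ mciC X U f) : 0 ≤ v x₀ := by
  obtain ⟨x, ⟨hxX, d, hd, hx, hconv⟩, rfl⟩ := hx₀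
  obtain ⟨M, hM⟩ := (hX.prod hU).exists_bound_of_continuousOn hf.continuousOn
  obtain ⟨B, hB⟩ := hX.exists_bound_of_continuousOn hv.continuous.continuousOn
  rw [ae_restrict_iff' measurableSet_Ici] at hconv
  have key (T : ℝ) (hT : 0 ≤ T) : -B * Real.exp (-β * T) ≤ v (x 0) := by
    refine le_trans ?_ (exp_mul_le_of_ae_fderiv_le (M := M) hT (hd T hT) ?_
      (fun t ht => hx t ht.1) hv (β := β) ?_)
    · have := neg_le_of_abs_le (hB _ (hxX T hT))
      nlinarith [Real.exp_pos (-β * T)]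
    · filter_upwards [hconv] with t ht htT
      have := convexHull_min (t := Metric.closedBall 0 M) ?_ (convex_closedBall _ _) (ht htT.1)
      · simpa using this
      · rintro _ ⟨u, hu, rfl⟩
        simpa using hM (x t, u) ⟨hxX t htT.1, hu⟩
    · filter_upwards [hconv] with t ht htT
      refine convexHull_min (t := {z | fderiv ℝ v (x t) z ≤ β * v (x t)}) ?_
        (convex_halfSpace_le (fderiv ℝ v (x t)).isLinear _) (ht htT.1)
      rintro _ ⟨u, hu, rfl⟩
      exact hle _ (hxX t htT.1) u hu
  have hlim : Filter.Tendsto (fun T : ℝ => -B * Real.exp (-β * T)) Filter.atTop (nhds 0) := by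
    have : Filter.Tendsto (fun T : ℝ => -β * T) Filter.atTop Filter.atBot :=
      Filter.tendsto_id.const_mul_atTop_of_neg (neg_lt_zero.2 hβ)
    simpa using (Real.tendsto_exp_atBot.comp this).const_mul (-B)
  exact le_of_tendsto hlim (Filter.eventually_atTop.2 ⟨0, key⟩)

/-- A point belongs to the maximum controlled invariant set if and only if arbitrarily fine
polygonal approximations of trajectories survive arbitrarily long from nearby points. -/
theorem mem_mciC_iff (hX : IsCompact X) (hU : IsCompact U)
    (hf : Continuous fun p : EuclideanSpace ℝ (Fin n) × EuclideanSpace ℝ (Fin m) => f p.1 p.2)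
    {x₀ : EuclideanSpace ℝ (Fin n)} :
    x₀ ∈ mciC X U f ↔ ∀ ε > 0, ∀ T, ∃ y, dist y x₀ < ε ∧ ∃ t, T ≤ t ∧ EulerChain f X U ε t y := by
  refine ⟨fun hx₀ ε hε => ?_, fun h => ?_⟩
  · obtain ⟨V, hV, hV0, hle, hchain⟩ :=
      EulerChain.exists_contDiff_growth f X U hε one_pos
    refine hchain x₀ (le_antisymm ?_ (hV0 x₀))
    have := nonneg_of_mem_mciC hX hU hf one_pos hV.neg (fun x hx u hu => ?_) hx₀
    · exact neg_nonneg.1 this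
    · have := hle x hx u hu
      rw [fderiv_fun_neg, neg_apply]
      linarith
  · obtain ⟨K, γ, hγ, hγ0, hγX, hγd⟩ := exists_trajectory_of_eulerChain hX hU hf h
    refine ⟨γ, ⟨hγX, deriv γ, fun t _ => (hγ.eq_add_integral_deriv 0 t).1,
      fun t _ => (hγ.eq_add_integral_deriv 0 t).2, ?_⟩, hγ0⟩
    rw [ae_restrict_iff' measurableSet_Ici]
    filter_upwards [hγ.ae_differentiableAt_real, Measure.ae_ne volume (0 : ℝ)] with t hd ht0 ht
    exact hγd t (lt_of_le_of_ne ht ht0.symm) hd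

theorem isCompact_mciC (hX : IsCompact X) (hU : IsCompact U)
    (hf : Continuous fun p : EuclideanSpace ℝ (Fin n) × EuclideanSpace ℝ (Fin m) => f p.1 p.2) :
    IsCompact (mciC X U f) := by
  refine hX.of_isClosed_subset (isClosed_of_closure_subset fun x hx => ?_) mciC_subset
  refine (mem_mciC_iff hX hU hf).2 fun ε hε T => ?_
  obtain ⟨z, hz, hxz⟩ := Metric.mem_closure_iff.1 hx (ε / 2) (half_pos hε)
  obtain ⟨y, hy, t, ht, hc⟩ := (mem_mciC_iff hX hU hf).1 hz (ε / 2) (half_pos hε) T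
  refine ⟨y, ?_, t, ht, hc.mono (half_le_self hε.le)⟩
  rw [dist_comm] at hxz
  linarith [dist_triangle y z x]

theorem LiouvilleC.measure_compl_mciC (hX : IsCompact X) (hU : IsCompact U)
    (hf : Continuous fun p : EuclideanSpace ℝ (Fin n) × EuclideanSpace ℝ (Fin m) => f p.1 p.2)
    (hβ : 0 < β) {μ₀ : Measure (EuclideanSpace ℝ (Fin n))} [IsFiniteMeasure μ₀]
    {μ : Measure (EuclideanSpace ℝ (Fin n) × EuclideanSpace ℝ (Fin m))} [IsFiniteMeasure μ]
    (h : LiouvilleC f β μ₀ μ) (hμ₀ : μ₀ Xᶜ = 0) (hμ : μ (X ×ˢ U)ᶜ = 0) :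
    μ₀ (mciC X U f)ᶜ = 0 := by
  have hchain (k : ℕ) : ∀ᵐ x ∂μ₀, ∀ T, ∃ y, dist y x < 1 / (k + 1 : ℝ) ∧
      ∃ t, T ≤ t ∧ EulerChain f X U (1 / (k + 1 : ℝ)) t y := by
    obtain ⟨V, hV, hV0, hle, hch⟩ :=
      EulerChain.exists_contDiff_growth f X U (Nat.one_div_pos_of_nat (n := k) (α := ℝ)) hβ
    have hKc := hX.prod hU
    have hi0 : Integrable V μ₀ := Measure.integrable_of_measure_compl_eq_zero hX hμ₀ hV.continuous
    have hi1 : Integrable (fun p : EuclideanSpace ℝ (Fin n) × EuclideanSpace ℝ (Fin m) =>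
        V p.1) μ :=
      Measure.integrable_of_measure_compl_eq_zero hKc hμ (hV.continuous.comp continuous_fst)
    have hi2 := Measure.integrable_of_measure_compl_eq_zero hKc hμ
      (hV.continuous_fderiv_uncurry hf)
    have hint : ∫ x, V x ∂μ₀ ≤ 0 := by
      have h1 := h V hV
      have h2 := integral_mono_ae (hi1.const_mul β) hi2 (by
        filter_upwards [mem_ae_iff.2 hμ] with p hp using hle p.1 hp.1 p.2 hp.2)
      rw [integral_const_mul] at h2
      linarith
    filter_upwards [(integral_eq_zero_iff_of_nonneg hV0 hi0).1
      (hint.antisymm (integral_nonneg hV0))] with x hx using hch x hx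
  filter_upwards [ae_all_iff.2 hchain] with x hx
  refine (mem_mciC_iff hX hU hf).2 fun ε hε T => ?_
  obtain ⟨k, hk⟩ := exists_nat_one_div_lt hε
  obtain ⟨y, hy, t, ht, hc⟩ := hx k T
  exact ⟨y, hy.trans hk, t, ht, hc.mono hk.le⟩

theorem exists_feasibleC_volume_restrict_mciC (hX : IsCompact X) (hU : IsCompact U)
    (hf : Continuous fun p : EuclideanSpace ℝ (Fin n) × EuclideanSpace ℝ (Fin m) => f p.1 p.2)
    (hβ : 0 < β) :
    ∃ μ μh, FeasibleC X U f β (volume.restrict (mciC X U f)) μ μh := by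
  have hS := isCompact_mciC hX hU hf
  obtain ⟨μ, hμfin, hμ, hL⟩ := exists_measure_discounted_liouville (f := f) volume hS hX hU hf hβ
    fun v hv hle x hx => nonneg_of_mem_mciC hX hU hf hβ hv hle hx
  have hsupp {A : Set (EuclideanSpace ℝ (Fin n))} (hA : A ⊆ X) :
      msupport ((volume : Measure (EuclideanSpace ℝ (Fin n))).restrict A) ⊆ X :=
    hX.isClosed.msupport_subset <| by
      rw [Measure.restrict_apply hX.measurableSet.compl,
        Set.disjoint_iff_inter_eq_empty.1 (Set.disjoint_compl_left_iff_subset.2 hA), measure_empty]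
  have hfin {A : Set (EuclideanSpace ℝ (Fin n))} (hA : A ⊆ X) :
      IsFiniteMeasure ((volume : Measure (EuclideanSpace ℝ (Fin n))).restrict A) :=
    isFiniteMeasure_restrict.2 ((measure_mono hA).trans_lt hX.measure_lt_top).ne
  refine ⟨μ, volume.restrict (X \ mciC X U f), hfin mciC_subset, hμfin, hfin Set.sdiff_subset,
    hsupp mciC_subset, hsupp Set.sdiff_subset, (hX.prod hU).isClosed.msupport_subset hμ, hL, ?_⟩
  rw [← Measure.restrict_union Set.disjoint_sdiff_right
    (hX.measurableSet.diff hS.measurableSet), Set.union_sdiff_cancel mciC_subset]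

theorem FeasibleC.measure_le (hX : IsCompact X) (hU : IsCompact U)
    (hf : Continuous fun p : EuclideanSpace ℝ (Fin n) × EuclideanSpace ℝ (Fin m) => f p.1 p.2)
    (hβ : 0 < β) {μ₀ μh : Measure (EuclideanSpace ℝ (Fin n))}
    {μ : Measure (EuclideanSpace ℝ (Fin n) × EuclideanSpace ℝ (Fin m))}
    (h : FeasibleC X U f β μ₀ μ μh) : μ₀ X ≤ volume (mciC X U f) := by
  obtain ⟨hf0, hf1, -, hs0, -, hs1, hL, hsum⟩ := h
  have hS := isCompact_mciC hX hU hf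
  have hnull := hL.measure_compl_mciC hX hU hf hβ
    (measure_compl_eq_zero_of_msupport_subset hs0) (measure_compl_eq_zero_of_msupport_subset hs1)
  calc μ₀ X ≤ μ₀ (mciC X U f) + μ₀ (mciC X U f)ᶜ :=
        (measure_mono (by simp)).trans (measure_union_le _ _)
    _ ≤ (μ₀ + μh) (mciC X U f) := by simp [hnull]
    _ ≤ volume (mciC X U f) := by
      rw [hsum]
      exact Measure.restrict_apply_le _ _

end MCI

theorem continuous_primal_value_eq_volume_MCI {n m : ℕ}
    (X : Set (EuclideanSpace ℝ (Fin n))) (U : Set (EuclideanSpace ℝ (Fin m)))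
    (hX : IsCompact X) (hU : IsCompact U)
    (f : EuclideanSpace ℝ (Fin n) → EuclideanSpace ℝ (Fin m) → EuclideanSpace ℝ (Fin n))
    (hf : Continuous fun p : EuclideanSpace ℝ (Fin n) × EuclideanSpace ℝ (Fin m) => f p.1 p.2)
    (β : ℝ) (hβ : 0 < β) :
    sSup {r : ℝ≥0∞ | ∃ μ₀ μ μh, FeasibleC X U f β μ₀ μ μh ∧ r = μ₀ X}
      = volume (mciC X U f) ∧
    ∃ μ μh, FeasibleC X U f β (volume.restrict (mciC X U f)) μ μh := by
  have hex := exists_feasibleC_volume_restrict_mciC hX hU hf hβ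
  refine ⟨le_antisymm (sSup_le ?_) ?_, hex⟩
  · rintro _ ⟨μ₀, μ, μh, h, rfl⟩
    exact h.measure_le hX hU hf hβ
  · obtain ⟨μ, μh, h⟩ := hex
    refine le_sSup ⟨_, μ, μh, h, ?_⟩
    rw [Measure.restrict_apply hX.measurableSet, Set.inter_eq_right.2 mciC_subset]
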